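/- Let u : ℝⁿ → ℝ be continuous and bounded, let L : ℝⁿ → [0,∞) be a nonnegative C¹ function with L(0) = DL(0) = 0 and L superlinear, and suppose u is differentiable at a point x ∈ ℝⁿ. Then for every direction γ ∈ ℝⁿ with |γ| = 1, the one-sided directional derivatives of the infimal convolutions satisfy D_γ u_t(x) → Du(x)·γ as t → 0⁺. -/

import Mathlib

open MeasureTheory Filter Metric Set
open scoped RealInnerProductSpace ENNReal Topology NNReal

noncomputable section

/-- Euclidean space `ℝⁿ`. -/
abbrev Eucl (n : ℕ) := EuclideanSpace ℝ (Fin n)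

/-- Infimal convolution (Hopf–Lax formula): `u_t(x) = inf_a ( u(x + t a) + t L(a) )`. -/
def infConv {n : ℕ} (u L : Eucl n → ℝ) (t : ℝ) (x : Eucl n) : ℝ :=
  ⨅ a : Eucl n, (u (x + t • a) + t * L a)

/-- `L` is superlinear: `L x / ‖x‖ → ∞` as `‖x‖ → ∞`. -/
def Superlinear {n : ℕ} (L : Eucl n → ℝ) : Prop :=
  Tendsto (fun x => L x / ‖x‖) (Bornology.cobounded (Eucl n)) atTop

/-- `g` is the weak (distributional) gradient of `u` on `ℝⁿ`. -/
def HasWeakGradient {n : ℕ} (u : Eucl n → ℝ) (g : Eucl n → Eucl n) : Prop :=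
  ∀ φ : Eucl n → ℝ, ContDiff ℝ (⊤ : ℕ∞) φ → HasCompactSupport φ →
    ∀ v : Eucl n, ∫ x, u x * fderiv ℝ φ x v = - ∫ x, φ x * ⟪g x, v⟫

/-- The set `R u_t(x)` of minimizers in the infimal convolution. -/
def minSet {n : ℕ} (u L : Eucl n → ℝ) (t : ℝ) (x : Eucl n) : Set (Eucl n) :=
  {a | infConv u L t x = u (x + t • a) + t * L a}

/-!
Blowing up around `x`, `u_t(x + t c) = t · inf_a (v(c + a) + L(a))` with `v(z) = u(x + t z) / t`,
and as `t → 0⁺` the function `v - v(0)` converges to the linear form `p = Du(x)` uniformly on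
bounded sets. Superlinearity of `L` keeps almost-minimizers of `a ↦ v(c + a) + L(a)` bounded, so for
small `t` they are almost-minimizers of the coercive `C¹` function `G(a) = p(a) + L(a)`. Near an
almost-minimizer `DG` is small, that is, `L` increases like `-p`. Testing the infimum at `c'` with
the almost-minimizer `a` at `c` moved to `a + (c - c')` leaves `v` evaluated at the same point and
only changes `L`, by about `p(c' - c)`. Hence `u_t` is nearly affine with slope `p` on a ball around
`x` whose radius is proportional to `t`.
-/

variable {E : Type*} [NormedAddCommGroup E]

section Growth

variable {L u : E → ℝ} {x : E}

lemma tendsto_sub_mul_norm_cobounded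
    (hL : Tendsto (fun a => L a / ‖a‖) (Bornology.cobounded E) atTop) (N : ℝ) :
    Tendsto (fun a => L a - N * ‖a‖) (Bornology.cobounded E) atTop := by
  have hprod : Tendsto (fun a => (L a / ‖a‖ - N) * ‖a‖) (Bornology.cobounded E) atTop :=
    (tendsto_atTop_add_const_right _ (-N) hL).atTop_mul_atTop₀ tendsto_norm_cobounded_atTop
  refine hprod.congr' ?_
  filter_upwards [Bornology.eventually_ne_cobounded (0 : E)] with a ha
  have hnorm : ‖a‖ ≠ 0 := norm_ne_zero_iff.2 ha
  field_simp

lemma exists_forall_mul_norm_sub_le [ProperSpace E] (hLc : Continuous L)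
    (hL : Tendsto (fun a => L a / ‖a‖) (Bornology.cobounded E) atTop) (N : ℝ) :
    ∃ R, ∀ a, N * ‖a‖ - R ≤ L a := by
  have htop := tendsto_sub_mul_norm_cobounded hL N
  rw [Metric.cobounded_eq_cocompact] at htop
  obtain ⟨a₀, ha₀⟩ := Continuous.exists_forall_le (by fun_prop) htop
  exact ⟨-(L a₀ - N * ‖a₀‖), fun a => by linarith [ha₀ a]⟩

lemma exists_forall_sub_mul_norm_le {m : ℝ} (hm : ∀ y, m ≤ u y)
    (hu : (fun y => u y - u x) =O[𝓝 x] fun y => y - x) :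
    ∃ C : ℝ≥0, ∀ y, u x - C * ‖y - x‖ ≤ u y := by
  obtain ⟨K, hK, hnear⟩ := hu.exists_nonneg
  obtain ⟨ρ, hρ, hball⟩ := Metric.eventually_nhds_iff.1 hnear.bound
  have hslope : 0 ≤ (u x - m) / ρ := div_nonneg (sub_nonneg.2 (hm x)) hρ.le
  refine ⟨.mk (K + (u x - m) / ρ) (add_nonneg hK hslope), fun y => ?_⟩
  rw [NNReal.coe_mk, add_mul]
  rcases lt_or_ge ‖y - x‖ ρ with hy | hy
  · have hdiff : |u y - u x| ≤ K * ‖y - x‖ := hball (by rwa [dist_eq_norm])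
    linarith [(abs_le.1 hdiff).1, mul_nonneg hslope (norm_nonneg (y - x))]
  · have hdrop : u x - m ≤ (u x - m) / ρ * ‖y - x‖ := by
      calc u x - m = (u x - m) / ρ * ρ := (div_mul_cancel₀ _ hρ.ne').symm
        _ ≤ (u x - m) / ρ * ‖y - x‖ := by gcongr
    linarith [hm y, mul_nonneg hK (norm_nonneg (y - x))]

end Growth

variable [NormedSpace ℝ E]

/-- The infimal convolution (Hopf–Lax formula) over an arbitrary real normed space; on `Eucl n` it
is definitionally `infConv`. -/
def hopfLax (u L : E → ℝ) (t : ℝ) (x : E) : ℝ :=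
  ⨅ a : E, (u (x + t • a) + t * L a)

/-- `a` minimizes `f` up to an error `δ`. Almost-minimizers replace exact ones, which need not exist
when `u` is not lower semicontinuous. -/
def IsAlmostMin {α : Type*} (δ : ℝ) (f : α → ℝ) (a : α) : Prop :=
  ∀ b, f a ≤ f b + δ

section AlmostMin

variable {G : E → ℝ} {ε : ℝ≥0}

lemma IsAlmostMin.mono {α : Type*} {f : α → ℝ} {a : α} {δ δ' : ℝ} (h : IsAlmostMin δ f a)
    (hδ : δ ≤ δ') : IsAlmostMin δ' f a :=
  fun b => (h b).trans (by gcongr)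

lemma exists_eventually_lipschitzOnWith_ball_of_isAlmostMin (hG : ContDiff ℝ 1 G) (hε : 0 < ε)
    (a : E) :
    ∃ δ > 0, ∀ᶠ a' in 𝓝 a, IsAlmostMin δ G a' → LipschitzOnWith ε G (ball a' δ) := by
  by_cases ha : ∀ b, G a ≤ G b
  · have hderiv : fderiv ℝ G a = 0 := IsLocalMin.fderiv_eq_zero (Eventually.of_forall ha)
    have hstrict : HasStrictFDerivAt G (fderiv ℝ G a) a :=
      hG.contDiffAt.hasStrictFDerivAt one_ne_zero
    obtain ⟨s, hs, hLip⟩ := hstrict.exists_lipschitzOnWith_of_nnnorm_lt ε (by simpa [hderiv])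
    obtain ⟨r, hr, hrs⟩ := Metric.mem_nhds_iff.1 hs
    refine ⟨r / 2, half_pos hr, ?_⟩
    filter_upwards [ball_mem_nhds a (half_pos hr)] with a' ha' _
    exact hLip.mono ((ball_subset_ball' (by linarith [mem_ball.1 ha'])).trans hrs)
  · push Not at ha
    obtain ⟨b, hb⟩ := ha
    refine ⟨(G a - G b) / 2, by linarith, ?_⟩
    have hnot : ∀ᶠ a' in 𝓝 a, G b + (G a - G b) / 2 < G a' :=
      hG.continuous.continuousAt.eventually_const_lt (by linarith)
    filter_upwards [hnot] with a' ha' hmin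
    exact absurd (hmin b) ha'.not_ge

lemma exists_forall_lipschitzOnWith_ball_of_isAlmostMin (hG : ContDiff ℝ 1 G)
    (hcoercive : Tendsto G (cocompact E) atTop) (hε : 0 < ε) :
    ∃ δ > 0, ∀ a, IsAlmostMin δ G a → LipschitzOnWith ε G (ball a δ) := by
  obtain ⟨K, hK, hKsub⟩ := mem_cocompact.1 (hcoercive.eventually_gt_atTop (G 0 + 1))
  have hδK : ∃ δ > 0, ∀ a ∈ K, IsAlmostMin δ G a → LipschitzOnWith ε G (ball a δ) := by
    refine hK.induction_on ⟨1, one_pos, by simp⟩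
      (fun s t hst ⟨δ, hδ, ht⟩ => ⟨δ, hδ, fun a ha => ht a (hst ha)⟩) ?_ fun a _ => ?_
    · rintro s t ⟨δ₁, hδ₁, hs⟩ ⟨δ₂, hδ₂, ht⟩
      refine ⟨min δ₁ δ₂, lt_min hδ₁ hδ₂, fun a ha hmin => ?_⟩
      rcases ha with ha | ha
      · exact (hs a ha (hmin.mono (min_le_left _ _))).mono (ball_subset_ball (min_le_left _ _))
      · exact (ht a ha (hmin.mono (min_le_right _ _))).mono (ball_subset_ball (min_le_right _ _))
    · obtain ⟨δ, hδ, hLip⟩ := exists_eventually_lipschitzOnWith_ball_of_isAlmostMin hG hε a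
      exact ⟨_, mem_nhdsWithin_of_mem_nhds hLip, δ, hδ, fun _ h => h⟩
  obtain ⟨δ, hδ, hLip⟩ := hδK
  refine ⟨min δ 1, lt_min hδ one_pos, fun a ha => ?_⟩
  have haK : a ∈ K := by
    by_contra haK
    have hlarge : G 0 + 1 < G a := hKsub haK
    linarith [ha 0, min_le_right δ 1]
  exact (hLip a haK (ha.mono (min_le_left _ _))).mono (ball_subset_ball (min_le_left _ _))

end AlmostMin

lemma tendsto_clm_add_cocompact [ProperSpace E] {L : E → ℝ}
    (hL : Tendsto (fun a => L a / ‖a‖) (Bornology.cobounded E) atTop) (p : E →L[ℝ] ℝ) :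
    Tendsto (fun a => p a + L a) (cocompact E) atTop := by
  have htop := tendsto_sub_mul_norm_cobounded hL ‖p‖
  rw [Metric.cobounded_eq_cocompact] at htop
  refine tendsto_atTop_mono (fun a => ?_) htop
  linarith [neg_le_of_abs_le (p.le_opNorm a)]

section UnitTime

variable {v L : E → ℝ} {p : E →L[ℝ] ℝ} {C : ℝ≥0} {R η σ : ℝ} {a c c' : E}

lemma hopfLax_one_le (hv : ∀ z, v 0 - C * ‖z‖ ≤ v z) (hL : ∀ a, C * ‖a‖ - R ≤ L a) (c a : E) :
    hopfLax v L 1 c ≤ v (c + a) + L a := by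
  have hbdd : BddBelow (range fun a => v (c + (1 : ℝ) • a) + 1 * L a) := by
    refine ⟨v 0 - C * ‖c‖ - R, ?_⟩
    rintro _ ⟨b, rfl⟩
    simp only [one_smul, one_mul]
    have hnorm : C * ‖c + b‖ ≤ C * ‖c‖ + C * ‖b‖ := by
      rw [← mul_add]
      gcongr
      exact norm_add_le c b
    linarith [hv (c + b), hL b]
  simpa only [hopfLax, one_smul, one_mul] using ciInf_le hbdd a

lemma exists_lt_hopfLax_one_add (v L : E → ℝ) (c : E) (hσ : 0 < σ) :
    ∃ a, v (c + a) + L a < hopfLax v L 1 c + σ := by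
  simpa only [hopfLax, one_smul, one_mul] using exists_lt_of_ciInf_lt (lt_add_of_pos_right _ hσ)

lemma norm_le_of_isAlmostMin (hv : ∀ z, v 0 - C * ‖z‖ ≤ v z)
    (hL : ∀ a, (C + 1) * ‖a‖ - R ≤ L a) (hvp : v c - v 0 - p c ≤ η) (hc : ‖c‖ ≤ 1)
    (ha : IsAlmostMin σ (fun a => v (c + a) + L a) a) :
    ‖a‖ ≤ ‖p‖ + C + L 0 + R + η + σ := by
  have htest : v (c + a) + L a ≤ v c + L 0 + σ := by simpa using ha 0
  have hpc : p c ≤ ‖p‖ := (le_abs_self _).trans (p.unit_le_opNorm c hc)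
  have hnorm : C * ‖c + a‖ ≤ C * (1 + ‖a‖) := by
    gcongr
    exact (norm_add_le c a).trans (by gcongr)
  linarith [hv (c + a), hL a]

lemma IsAlmostMin.clm_add (ha : IsAlmostMin σ (fun a => v (c + a) + L a) a) {a₀ : E}
    (ha₀ : ∀ b, p a₀ + L a₀ ≤ p b + L b) (hva : |v (c + a) - v 0 - p (c + a)| ≤ η)
    (hva₀ : |v (c + a₀) - v 0 - p (c + a₀)| ≤ η) :
    IsAlmostMin (σ + 2 * η) (fun a => p a + L a) a := by
  intro b
  have htest : v (c + a) + L a ≤ v (c + a₀) + L a₀ + σ := ha a₀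
  rw [map_add] at hva hva₀
  linarith [ha₀ b, (abs_le.1 hva).1, (abs_le.1 hva₀).2]

lemma exists_forall_isAlmostMin_clm_add [ProperSpace E] (hLc : Continuous L)
    (hL : Tendsto (fun a => L a / ‖a‖) (Bornology.cobounded E) atTop) (p : E →L[ℝ] ℝ) (C : ℝ≥0) :
    ∃ r, ∀ v : E → ℝ, (∀ z, v 0 - C * ‖z‖ ≤ v z) →
      ∀ η ≤ 1, (∀ z ∈ closedBall 0 r, |v z - v 0 - p z| ≤ η) →
      ∀ c ∈ closedBall 0 1, ∀ σ ≤ 1, ∀ a, IsAlmostMin σ (fun a => v (c + a) + L a) a →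
        IsAlmostMin (σ + 2 * η) (fun a => p a + L a) a := by
  obtain ⟨R, hR⟩ := exists_forall_mul_norm_sub_le hLc hL (C + 1)
  obtain ⟨a₀, ha₀⟩ := Continuous.exists_forall_le (by fun_prop) (tendsto_clm_add_cocompact hL p)
  let B := max 0 (max ‖a₀‖ (‖p‖ + C + L 0 + R + 1 + 1))
  have hclose_range {c b : E} (hc : ‖c‖ ≤ 1) (hb : ‖b‖ ≤ B) : c + b ∈ closedBall 0 (1 + B) :=
    mem_closedBall_zero_iff.2 ((norm_add_le c b).trans (add_le_add hc hb))
  refine ⟨1 + B, fun v hv η hη hvp c hc σ hσ a ha => ?_⟩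
  rw [mem_closedBall_zero_iff] at hc
  have hvpc : v c - v 0 - p c ≤ 1 := by
    have hmem := hclose_range hc (norm_zero.trans_le (le_max_left 0 _))
    rw [add_zero] at hmem
    exact (le_abs_self _).trans ((hvp c hmem).trans hη)
  have hanorm : ‖a‖ ≤ B :=
    (norm_le_of_isAlmostMin hv hR hvpc hc (ha.mono hσ)).trans
      ((le_max_right _ _).trans (le_max_right _ _))
  have ha₀norm : ‖a₀‖ ≤ B := (le_max_left _ _).trans (le_max_right _ _)
  exact ha.clm_add ha₀ (hvp _ (hclose_range hc hanorm)) (hvp _ (hclose_range hc ha₀norm))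

lemma hopfLax_one_sub_le {ε : ℝ≥0} {δ : ℝ} (hv : ∀ z, v 0 - C * ‖z‖ ≤ v z)
    (hL : ∀ a, C * ‖a‖ - R ≤ L a) (ha : v (c + a) + L a ≤ hopfLax v L 1 c + σ)
    (hLip : LipschitzOnWith ε (fun a => p a + L a) (ball a δ)) (hcc' : ‖c' - c‖ < δ) :
    hopfLax v L 1 c' - hopfLax v L 1 c ≤ p (c' - c) + ε * ‖c' - c‖ + σ := by
  have htest : hopfLax v L 1 c' ≤ v (c + a) + L (a - (c' - c)) := by
    convert hopfLax_one_le hv hL c' (a - (c' - c)) using 3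
    abel
  have hδ : 0 < δ := (norm_nonneg _).trans_lt hcc'
  have hG := hLip.dist_le_mul (a - (c' - c)) (by simpa using hcc') a (mem_ball_self hδ)
  rw [Real.dist_eq, dist_eq_norm, sub_sub_cancel_left, norm_neg, map_sub] at hG
  linarith [(abs_le.1 hG).2]

theorem exists_forall_approximatesLinearOn_hopfLax_one [ProperSpace E] (hL1 : ContDiff ℝ 1 L)
    (hL : Tendsto (fun a => L a / ‖a‖) (Bornology.cobounded E) atTop) (p : E →L[ℝ] ℝ) (C : ℝ≥0)
    {ε : ℝ≥0} (hε : 0 < ε) :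
    ∃ δ > 0, ∃ r, ∀ v : E → ℝ, (∀ z, v 0 - C * ‖z‖ ≤ v z) →
      (∀ z ∈ closedBall 0 r, |v z - v 0 - p z| ≤ δ) →
      ApproximatesLinearOn (hopfLax v L 1) p (ball 0 δ) ε := by
  obtain ⟨δ, hδ, hLip⟩ := exists_forall_lipschitzOnWith_ball_of_isAlmostMin
    (p.contDiff.add hL1) (tendsto_clm_add_cocompact hL p) hε
  obtain ⟨r, hr⟩ := exists_forall_isAlmostMin_clm_add hL1.continuous hL p C
  obtain ⟨R, hR⟩ := exists_forall_mul_norm_sub_le hL1.continuous hL C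
  obtain ⟨κ, hκ, hκ_one, hκδ⟩ : ∃ κ > 0, κ ≤ 1 ∧ κ ≤ δ / 4 :=
    ⟨min 1 (δ / 4), by positivity, min_le_left _ _, min_le_right _ _⟩
  refine ⟨κ, hκ, r, fun v hv hvp => ?_⟩
  have hone_sided : ∀ c ∈ ball (0 : E) κ, ∀ c' ∈ ball (0 : E) κ,
      hopfLax v L 1 c' - hopfLax v L 1 c ≤ p (c' - c) + ε * ‖c' - c‖ := by
    intro c hc c' hc'
    rw [mem_ball_zero_iff] at hc hc'
    refine le_of_forall_pos_le_add fun s hs => ?_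
    obtain ⟨a, ha⟩ := exists_lt_hopfLax_one_add v L c (lt_min hs hκ)
    have hmin : IsAlmostMin (min s κ) (fun a => v (c + a) + L a) a :=
      fun b => ha.le.trans (by gcongr; exact hopfLax_one_le hv hR c b)
    have hminG : IsAlmostMin (min s κ + 2 * κ) (fun a => p a + L a) a :=
      hr v hv κ hκ_one hvp c (mem_closedBall_zero_iff.2 (hc.le.trans hκ_one)) _
        ((min_le_right _ _).trans hκ_one) a hmin
    have hLip_a := hLip a (hminG.mono (by linarith [min_le_right s κ]))
    refine (hopfLax_one_sub_le hv hR ha.le hLip_a ?_).trans (by gcongr; exact min_le_left _ _)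
    linarith [norm_sub_le c' c]
  intro c hc c' hc'
  have hle := hone_sided c' hc' c hc
  have hge := hone_sided c hc c' hc'
  rw [← neg_sub c c', map_neg, norm_neg] at hge
  rw [Real.norm_eq_abs, abs_le]
  constructor <;> linarith

end UnitTime

section BlowUp

/-- The blow-up of `u` at `x` at scale `t`, without subtracting `u x`, so that its value at `0` is
`u x / t` and `hopfLax` is homogeneous under it even where its infimum is the junk value `0`. -/
def blowUp (u : E → ℝ) (x : E) (t : ℝ) (z : E) : ℝ :=
  u (x + t • z) / t

variable {u L : E → ℝ} {x : E} {p : E →L[ℝ] ℝ} {t : ℝ}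

lemma hopfLax_add_smul (u L : E → ℝ) (x c : E) (ht : 0 < t) :
    hopfLax u L t (x + t • c) = t * hopfLax (blowUp u x t) L 1 c := by
  rw [hopfLax, hopfLax, Real.mul_iInf_of_nonneg ht.le]
  congr! 2 with a
  rw [blowUp, one_smul, one_mul, mul_add, mul_div_cancel₀ _ ht.ne', smul_add, add_assoc]

lemma approximatesLinearOn_hopfLax_of_blowUp {ε : ℝ≥0} {δ : ℝ} (ht : 0 < t)
    (h : ApproximatesLinearOn (hopfLax (blowUp u x t) L 1) p (ball 0 δ) ε) :
    ApproximatesLinearOn (hopfLax u L t) p (ball x (t * δ)) ε := by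
  have hparam : ∀ y ∈ ball x (t * δ), ∃ c ∈ ball (0 : E) δ, x + t • c = y := by
    intro y hy
    refine ⟨t⁻¹ • (y - x), ?_, by rw [smul_inv_smul₀ ht.ne', add_sub_cancel]⟩
    rwa [mem_ball_zero_iff, norm_smul_of_nonneg (inv_nonneg.2 ht.le), inv_mul_lt_iff₀ ht,
      ← mem_ball_iff_norm]
  intro y hy y' hy'
  obtain ⟨c, hc, rfl⟩ := hparam y hy
  obtain ⟨c', hc', rfl⟩ := hparam y' hy'
  rw [hopfLax_add_smul u L x c ht, hopfLax_add_smul u L x c' ht, add_sub_add_left_eq_sub,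
    ← smul_sub, map_smul, smul_eq_mul, ← mul_sub, ← mul_sub, norm_mul, Real.norm_of_nonneg ht.le,
    norm_smul_of_nonneg ht.le, mul_left_comm]
  gcongr
  exact h c hc c' hc'

lemma eventually_abs_blowUp_sub_le (hu : HasFDerivAt u p x) (r : ℝ) {δ : ℝ} (hδ : 0 < δ) :
    ∀ᶠ t in 𝓝[>] (0 : ℝ),
      ∀ z ∈ closedBall 0 r, |blowUp u x t z - blowUp u x t 0 - p z| ≤ δ := by
  have hr : 0 < |r| + 1 := by positivity
  obtain ⟨ρ, hρ, hsmall⟩ := Metric.eventually_nhds_iff.1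
    ((hasFDerivAt_iff_isLittleO_nhds_zero.1 hu).def (div_pos hδ hr))
  filter_upwards [Ioo_mem_nhdsGT (div_pos hρ hr)] with t ⟨ht, htρ⟩ z hz
  have hz : ‖z‖ ≤ |r| + 1 := by
    linarith [mem_closedBall_zero_iff.1 hz, le_abs_self r]
  have htz : ‖t • z‖ ≤ t * (|r| + 1) := by
    rw [norm_smul_of_nonneg ht.le]
    gcongr
  have hlin : |u (x + t • z) - u x - p (t • z)| ≤ t * δ := by
    calc |u (x + t • z) - u x - p (t • z)| ≤ δ / (|r| + 1) * ‖t • z‖ :=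
          hsmall (by rw [dist_zero_right]; exact htz.trans_lt ((lt_div_iff₀ hr).1 htρ))
      _ ≤ δ / (|r| + 1) * (t * (|r| + 1)) := by gcongr
      _ = t * δ := by field_simp
  have hscale : blowUp u x t z - blowUp u x t 0 - p z =
      (u (x + t • z) - u x - p (t • z)) / t := by
    rw [blowUp, blowUp, smul_zero, add_zero, map_smul, smul_eq_mul]
    field_simp
  rwa [hscale, abs_div, abs_of_pos ht, div_le_iff₀' ht]

theorem exists_eventually_approximatesLinearOn_hopfLax [ProperSpace E] (hL1 : ContDiff ℝ 1 L)
    (hL : Tendsto (fun a => L a / ‖a‖) (Bornology.cobounded E) atTop) (hu : HasFDerivAt u p x)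
    (hcalm : ∃ C : ℝ≥0, ∀ y, u x - C * ‖y - x‖ ≤ u y) {ε : ℝ≥0} (hε : 0 < ε) :
    ∃ δ > 0, ∀ᶠ t in 𝓝[>] (0 : ℝ),
      ApproximatesLinearOn (hopfLax u L t) p (ball x (t * δ)) ε := by
  obtain ⟨C, hC⟩ := hcalm
  obtain ⟨δ, hδ, r, happrox⟩ := exists_forall_approximatesLinearOn_hopfLax_one hL1 hL p C hε
  refine ⟨δ, hδ, ?_⟩
  filter_upwards [eventually_abs_blowUp_sub_le hu r hδ, self_mem_nhdsWithin] with t hclose ht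
  rw [mem_Ioi] at ht
  refine approximatesLinearOn_hopfLax_of_blowUp ht (happrox _ (fun z => ?_) hclose)
  have hz := hC (x + t • z)
  rw [add_sub_cancel_left, norm_smul_of_nonneg ht.le] at hz
  rw [blowUp, blowUp, smul_zero, add_zero, le_div_iff₀ ht, sub_mul, div_mul_cancel₀ _ ht.ne']
  linarith

end BlowUp

lemma abs_sub_le_of_approximatesLinearOn {f : E → ℝ} {p : E →L[ℝ] ℝ} {s : Set E} {ε : ℝ≥0}
    (hf : ApproximatesLinearOn f p s ε) {x γ : E} (hs : s ∈ 𝓝 x) {d : ℝ}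
    (hd : Tendsto (fun h : ℝ => (f (x + h • γ) - f x) / h) (𝓝[>] 0) (𝓝 d)) :
    |d - p γ| ≤ ε * ‖γ‖ := by
  have hline : Tendsto (fun h : ℝ => x + h • γ) (𝓝[>] 0) (𝓝 x) :=
    tendsto_nhdsWithin_of_tendsto_nhds (Continuous.tendsto' (by fun_prop) 0 x (by simp))
  refine le_of_tendsto (hd.sub_const (p γ)).abs ?_
  filter_upwards [hline hs, self_mem_nhdsWithin] with h hmem hpos
  rw [mem_Ioi] at hpos
  have happrox := hf _ hmem x (mem_of_mem_nhds hs)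
  rw [add_sub_cancel_left, map_smul, smul_eq_mul, norm_smul_of_nonneg hpos.le,
    Real.norm_eq_abs] at happrox
  have hscale : (f (x + h • γ) - f x) / h - p γ = (f (x + h • γ) - f x - h * p γ) / h := by
    field_simp
  rw [hscale, abs_div, abs_of_pos hpos, div_le_iff₀ hpos]
  linarith

theorem stmt7_general [FiniteDimensional ℝ E] {u L : E → ℝ} {p : E →L[ℝ] ℝ} {x : E}
    (hL1 : ContDiff ℝ 1 L)
    (hL : Tendsto (fun a => L a / ‖a‖) (Bornology.cobounded E) atTop)
    (hu : HasFDerivAt u p x) (hcalm : ∃ C : ℝ≥0, ∀ y, u x - C * ‖y - x‖ ≤ u y)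
    {γ : E} {D : ℝ → ℝ}
    (hD : ∀ᶠ t in 𝓝[>] (0 : ℝ),
      Tendsto (fun h : ℝ => (hopfLax u L t (x + h • γ) - hopfLax u L t x) / h)
        (𝓝[>] 0) (𝓝 (D t))) :
    Tendsto D (𝓝[>] 0) (𝓝 (p γ)) := by
  rw [Metric.tendsto_nhds]
  intro ε hε
  have hslope : 0 < ε / (‖γ‖ + 1) := by positivity
  obtain ⟨δ, hδ, happrox⟩ := exists_eventually_approximatesLinearOn_hopfLax hL1 hL hu hcalm
    (Real.toNNReal_pos.2 hslope)
  filter_upwards [happrox, hD, self_mem_nhdsWithin] with t happrox hDt ht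
  calc |D t - p γ| ≤ (ε / (‖γ‖ + 1)).toNNReal * ‖γ‖ :=
        abs_sub_le_of_approximatesLinearOn happrox (ball_mem_nhds x (mul_pos ht hδ)) hDt
    _ < ε := by
      rw [Real.coe_toNNReal _ hslope.le, div_mul_eq_mul_div, div_lt_iff₀ (by positivity)]
      gcongr
      exact lt_add_one _

/-- Theorem 2.3. If `u` is continuous, bounded and differentiable at `x`,
then for every unit direction `γ` the one-sided directional derivatives of the infimal
convolutions satisfy `D_γ u_t(x) → Du(x)·γ` as `t → 0⁺`. -/
theorem stmt7 {n : ℕ}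
    (u : Eucl n → ℝ) (hu_cont : Continuous u) (hu_bdd : ∃ M, ∀ x, |u x| ≤ M)
    (L : Eucl n → ℝ) (hL_nonneg : ∀ x, 0 ≤ L x) (hL_C1 : ContDiff ℝ 1 L)
    (hL0 : L 0 = 0) (hDL0 : gradient L 0 = 0) (hL_sl : Superlinear L)
    (x : Eucl n) (hux : DifferentiableAt ℝ u x)
    (γ : Eucl n) (hγ : ‖γ‖ = 1) (D : ℝ → ℝ)
    (hD : ∀ t : ℝ, 0 < t →
      Tendsto (fun h : ℝ => (infConv u L t (x + h • γ) - infConv u L t x) / h)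
        (𝓝[>] 0) (𝓝 (D t))) :
    Tendsto D (𝓝[>] 0) (𝓝 ⟪gradient u x, γ⟫) := by
  obtain ⟨M, hM⟩ := hu_bdd
  rw [← InnerProductSpace.toDual_apply_apply (𝕜 := ℝ), toDual_gradient]
  exact stmt7_general hL_C1 hL_sl hux.hasFDerivAt
    (exists_forall_sub_mul_norm_le (fun y => neg_le_of_abs_le (hM y)) hux.isBigO_sub)
    (eventually_nhdsWithin_of_forall hD)
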